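/- (Factorization of the Tratnik polynomials.) Let j⁽⁰⁾,…,j⁽⁴⁾ be reals satisfying the inequalities of the context with N := j⁽¹⁾+j⁽²⁾−j⁽³⁾+j⁽⁴⁾+j⁽⁰⁾ a positive integer, and assume all Pochhammer symbols appearing in denominators below are nonzero. Then for all integers 0 ≤ x₁ ≤ x₂ ≤ N and k₁, k₂ ≥ 0 with k₁+k₂ ≤ N and k₁ ≤ x₂: r_{x₁}(k₁; −2j⁽²⁾−1, −2j⁽¹⁾−1, −x₂−1, x₂−2j⁽²⁾+2j⁽³⁾+1) · r_{N−x₂}(N−k₁−k₂; −2j⁽⁰⁾−1, −2j⁽⁴⁾−1, k₁−N−1, N−k₁−2j⁽⁰⁾−2j⁽¹⁾−1) = [ (k₁−N+2j⁽¹⁾+1)_{N−x₂} (−2j⁽⁴⁾)_{N−x₂} (k₁+2j⁽⁰⁾−N+1)_{k₂} (2k₁−2j⁽²⁾+2j⁽³⁾+2)_{k₂} ] / [ (N−k₁−2j⁽⁰⁾−2j⁽¹⁾−2j⁽⁴⁾−1)_{N−x₂} (−2j⁽⁰⁾)_{N−x₂} (k₁−N+2j⁽¹⁾+1)_{k₂}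 (−2j⁽⁴⁾)_{k₂} ] · r_{k₁}(x₁; −2j⁽²⁾−1, 2j⁽³⁾+1, −x₂−1, x₂−2j⁽¹⁾−2j⁽²⁾−1) · r_{k₂}(x₂−k₁; 2k₁−2j⁽²⁾+2j⁽³⁾+1, −2j⁽⁴⁾−1, k₁−N−1, k₁+N−2j⁽¹⁾−2j⁽²⁾+2j⁽³⁾+1). -/

import Mathlib

noncomputable section

open Finset Real

/-- Pochhammer symbol `(y)_k = y(y+1)⋯(y+k−1)` for real `y`. -/
def poch (y : ℝ) (k : ℕ) : ℝ := ∏ i ∈ Finset.range k, (y + i)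

/-- The terminating Racah function `r_n(m; α, β, −𝒩−1, δ)` on the grid `{0,…,𝒩}`:
`r_n(m) = ∑_{k=0}^{n} (−n)_k (n+α+β+1)_k (−m)_k (m−𝒩+δ)_k /
  ((α+1)_k (β+δ+1)_k (−𝒩)_k k!)`. -/
def racah (𝒩 : ℕ) (α β δ : ℝ) (n m : ℕ) : ℝ :=
  ∑ k ∈ Finset.range (n + 1),
    (poch (-(n : ℝ)) k * poch ((n : ℝ) + α + β + 1) k * poch (-(m : ℝ)) k *
        poch ((m : ℝ) - (𝒩 : ℝ) + δ) k) /
      (poch (α + 1) k * poch (β + δ + 1) k * poch (-(𝒩 : ℝ)) k * (Nat.factorial k : ℝ))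

theorem poch_zero (y : ℝ) : poch y 0 = 1 := by simp [poch]

theorem poch_succ (y : ℝ) (k : ℕ) : poch y (k+1) = poch y k * (y + k) := by
  simp [poch, Finset.prod_range_succ]

theorem poch_succ' (y : ℝ) (k : ℕ) : poch y (k+1) = y * poch (y+1) k := by
  unfold poch
  rw [Finset.prod_range_succ', mul_comm]
  congr 1
  · simp
  · apply Finset.prod_congr rfl
    intro i _
    push_cast; ring

theorem poch_add (y : ℝ) (m n : ℕ) : poch y (m+n) = poch y m * poch (y+m) n := by
  induction n with
  | zero => simp [poch_zero]
  | succ n ih =>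
    rw [← add_assoc, poch_succ, poch_succ, ih]; push_cast; ring

theorem poch_split (y : ℝ) {k n : ℕ} (h : k ≤ n) :
    poch y n = poch y k * poch (y+k) (n-k) := by
  rw [← poch_add]; congr 1; omega

theorem poch_reflect (y : ℝ) (k : ℕ) : poch (1-k-y) k = (-1)^k * poch y k := by
  induction k generalizing y with
  | zero => simp [poch_zero]
  | succ k ih =>
    rw [poch_succ', poch_succ]
    have : (1 - ((k+1:ℕ):ℝ) - y + 1) = 1 - k - y := by push_cast; ring
    rw [this, ih]; push_cast; ring

theorem poch_ne_of_le {y : ℝ} {k n : ℕ} (h : k ≤ n) (hn : poch y n ≠ 0) : poch y k ≠ 0 := by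
  rw [poch_split y h] at hn
  exact left_ne_zero_of_mul hn

theorem poch_neg_nat_zero {n k : ℕ} (h : n < k) : poch (-(n:ℝ)) k = 0 := by
  unfold poch
  apply Finset.prod_eq_zero (Finset.mem_range.2 h); simp

theorem poch_neg_nat (n k : ℕ) :
    poch (-(n:ℝ)) k = (-1)^k * (n.choose k : ℝ) * (k.factorial : ℝ) := by
  induction k with
  | zero => simp [poch_zero]
  | succ k ih =>
    rw [poch_succ, ih]
    have h : ((n.choose (k+1) : ℝ)) * (k+1) = n.choose k * (n - k) := by
      rcases le_or_gt k n with hk | hk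
      · have := Nat.choose_succ_right_eq n k
        have h2 := congrArg (Nat.cast : ℕ → ℝ) this
        push_cast [Nat.cast_sub hk] at h2
        exact h2
      · simp [Nat.choose_eq_zero_of_lt hk, Nat.choose_eq_zero_of_lt (Nat.lt_succ_of_lt hk)]
    rw [Nat.factorial_succ]; push_cast
    have e : (-1:ℝ)^(k+1) * (n.choose (k+1) : ℝ) * ((k+1) * (k.factorial:ℝ))
      = (-1)^(k+1) * ((n.choose (k+1) : ℝ) * (k+1)) * (k.factorial:ℝ) := by ring
    rw [e, h]; ring

theorem poch_shift_sub (s : ℝ) (m : ℕ) :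
    poch (s+1) (m+1) - poch s (m+1) = (m+1) * poch (s+1) m := by
  rw [poch_succ', poch_succ' s, ← poch_succ', poch_succ]; ring

/-- Division-free Pfaff–Saalschütz. -/
theorem saal (k : ℕ) : ∀ D x y : ℝ,
    ∑ j ∈ range (k+1), (k.choose j : ℝ) * poch (D-x-y) (k-j) * poch x j * poch y j
      * poch (D+j) (k-j) = poch (D-x) k * poch (D-y) k := by
  induction k with
  | zero => intro D x y; simp [poch_zero]
  | succ k ih =>
    intro D x y
    have ih' := ih (D+1) x y
    set s := D - x - y with hs
    have hs1 : D + 1 - x - y = s + 1 := by rw [hs]; ring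
    rw [hs1] at ih'
    rw [poch_succ' (D-x), poch_succ' (D-y)]
    have r : (D-x) * poch (D-x+1) k * ((D-y) * poch (D-y+1) k)
        = (D-x)*(D-y) * (poch (D+1-x) k * poch (D+1-y) k) := by
      rw [show D - x + 1 = D+1-x by ring, show D - y + 1 = D+1-y by ring]; ring
    rw [r, ← ih', Finset.mul_sum]
    set w : ℕ → ℝ := fun j => poch s (k+1-j) * poch x j * poch y j * poch (D+j) (k+1-j) with hw
    have hL : ∑ j ∈ range (k+1+1), ((k+1).choose j : ℝ) * poch s (k+1-j) * poch x j * poch y j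
      * poch (D+j) (k+1-j) = ∑ j ∈ range (k+1), (k.choose j : ℝ) * (w j + w (j+1)) := by
      have h1 : ∑ j ∈ range (k+1+1), ((k+1).choose j : ℝ) * poch s (k+1-j) * poch x j * poch y j
        * poch (D+j) (k+1-j) = ∑ j ∈ range (k+1+1), ((k+1).choose j : ℝ) * w j := by
        apply Finset.sum_congr rfl; intro j _; simp only [hw]; ring
      rw [h1, Finset.sum_range_succ']
      have h2 : ∑ j ∈ range (k+1), (k.choose j : ℝ) * w j
        = ∑ j ∈ range (k+1), (k.choose (j+1) : ℝ) * w (j+1) + w 0 := by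
        have := Finset.sum_range_succ' (fun j => (k.choose j : ℝ) * w j) (k+1)
        rw [Finset.sum_range_succ] at this
        simpa using this
      simp only [mul_add, Finset.sum_add_distrib, h2, Nat.choose_succ_succ, Nat.cast_add, add_mul]
      simp
      ring
    rw [hL, ← sub_eq_zero, ← Finset.sum_sub_distrib]
    set g : ℕ → ℝ := fun j => (j:ℝ) * (k.choose j : ℝ) * poch (s+1) (k-j) * poch x j * poch y j
      * poch (D+j) (k+1-j) with hg
    have key : ∀ j ∈ range (k+1), (k.choose j : ℝ) * (w j + w (j+1)) -
        (D-x)*(D-y) * ((k.choose j : ℝ) * poch (s+1) (k-j) * poch x j * poch y j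
          * poch (D+1+j) (k-j)) = g j - g (j+1) := by
      intro j hj
      obtain ⟨m, rfl⟩ : ∃ m, k = j + m := ⟨k - j, by have := Finset.mem_range.1 hj; omega⟩
      simp only [hw, hg]
      rw [show j + m + 1 - j = m + 1 by omega, show j + m + 1 - (j+1) = m by omega,
        show j + m - j = m by omega]
      have hD : D + ((j+1:ℕ):ℝ) = D + 1 + j := by push_cast; ring
      rw [hD, poch_succ' (D + (j:ℝ)), show D + (j:ℝ) + 1 = D + 1 + j by ring, poch_succ' s,
        poch_succ x, poch_succ y]
      have hxy : (D-x)*(D-y) = (s-j)*(D+j)+(x+j)*(y+j) := by rw [hs]; ring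
      rw [hxy]
      cases m with
      | zero =>
        simp [poch_zero]; ring
      | succ m =>
        have hc : (((j+1:ℕ)):ℝ) * ((j+(m+1)).choose (j+1) : ℝ) = (m+1) * ((j+(m+1)).choose j : ℝ) := by
          have := Nat.choose_succ_right_eq (j+(m+1)) j
          rw [show j + (m+1) - j = m+1 by omega] at this
          have h2 := congrArg (Nat.cast : ℕ → ℝ) this
          push_cast at h2 ⊢
          linarith
        rw [hc, show j + (m+1) - (j+1) = m by omega]
        have hp := poch_shift_sub s m
        have hp' : poch s (m+1) = poch (s+1) (m+1) - (m+1) * poch (s+1) m := by linarith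
        rw [hp']; ring
    rw [Finset.sum_congr rfl key, Finset.sum_range_sub']
    simp [hg]

/-- Division-free (except for `D`) Whipple transformation. -/
theorem whipple (n : ℕ) (A B C D E : ℝ) (hD : poch D n ≠ 0) :
    ∑ k ∈ range (n+1), (n.choose k : ℝ) * poch A k * (poch B k * poch C k / poch D k)
        * poch (E+k) (n-k) * poch (E+D-B-C-A) (n-k)
    = ∑ j ∈ range (n+1), (n.choose j : ℝ) * poch A j * (poch (D-B) j * poch (D-C) j / poch D j)
        * poch (E+D-B-C+j) (n-j) * poch (E-A) (n-j) := by
  have h1 : ∀ k ∈ range (n+1), poch B k * poch C k / poch D k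
      = ∑ j ∈ range (k+1), (k.choose j : ℝ) * poch (B+C-D) (k-j) *
        (poch (D-B) j * poch (D-C) j / poch D j) := by
    intro k hk
    have hk' : k ≤ n := by have := Finset.mem_range.1 hk; omega
    have hDk := poch_ne_of_le hk' hD
    have hs := saal k D (D-B) (D-C)
    rw [show D - (D-B) = B by ring, show D - (D-C) = C by ring,
      show B - (D - C) = B + C - D by ring] at hs
    rw [← hs, Finset.sum_div]
    apply Finset.sum_congr rfl
    intro j hj
    have hj' : j ≤ k := by have := Finset.mem_range.1 hj; omega
    have hDj := poch_ne_of_le hj' hDk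
    have hsp := poch_split D hj'
    rw [div_eq_iff hDk, hsp]
    field_simp
  have h2 : ∑ k ∈ range (n+1), (n.choose k : ℝ) * poch A k * (poch B k * poch C k / poch D k)
        * poch (E+k) (n-k) * poch (E+D-B-C-A) (n-k)
      = ∑ k ∈ range (n+1), ∑ j ∈ range (k+1), (n.choose k : ℝ) * poch A k *
        ((k.choose j : ℝ) * poch (B+C-D) (k-j) * (poch (D-B) j * poch (D-C) j / poch D j))
        * poch (E+k) (n-k) * poch (E+D-B-C-A) (n-k) := by
    apply Finset.sum_congr rfl
    intro k hk
    rw [h1 k hk, Finset.mul_sum, Finset.sum_mul, Finset.sum_mul]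
  rw [h2, Finset.sum_sigma', ]
  have h3 : ∀ j ∈ range (n+1), (n.choose j : ℝ) * poch A j *
        (poch (D-B) j * poch (D-C) j / poch D j)
        * poch (E+D-B-C+j) (n-j) * poch (E-A) (n-j)
      = ∑ i ∈ range (n-j+1), (n.choose (j+i) : ℝ) * poch A (j+i) *
        (((j+i).choose j : ℝ) * poch (B+C-D) i * (poch (D-B) j * poch (D-C) j / poch D j))
        * poch (E+(j+i:ℕ)) (n-(j+i)) * poch (E+D-B-C-A) (n-(j+i)) := by
    intro j hj
    have hj' : j ≤ n := by have := Finset.mem_range.1 hj; omega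
    have hs := saal (n-j) (E+j) (A+j) (B+C-D)
    rw [show E + (j:ℝ) - (A+j) = E - A by ring,
      show E - A - (B+C-D) = E+D-B-C-A by ring,
      show E + (j:ℝ) - (B+C-D) = E+D-B-C+j by ring] at hs
    have : (n.choose j : ℝ) * poch A j *
        (poch (D-B) j * poch (D-C) j / poch D j)
        * poch (E+D-B-C+j) (n-j) * poch (E-A) (n-j) = (n.choose j : ℝ) * poch A j *
        (poch (D-B) j * poch (D-C) j / poch D j)
        * (poch (E-A) (n-j) * poch (E+D-B-C+j) (n-j)) := by ring
    rw [this, ← hs, Finset.mul_sum]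
    apply Finset.sum_congr rfl
    intro i hi
    have hi' : i ≤ n - j := by have := Finset.mem_range.1 hi; omega
    have hc : (n.choose (j+i) : ℝ) * ((j+i).choose j : ℝ) = (n.choose j : ℝ) * ((n-j).choose i : ℝ) := by
      have := Nat.choose_mul (n := n) (k := j+i) (s := j) (by omega)
      rw [show j + i - j = i by omega] at this
      exact_mod_cast this
    rw [poch_add, show n - (j+i) = n - j - i by omega,
      show E + ((j+i:ℕ):ℝ) = E + j + i by push_cast; ring]
    linear_combination (-(poch A j * poch (A+j) i * poch (B+C-D) i *
      (poch (D-B) j * poch (D-C) j / poch D j) * poch (E+j+i) (n-j-i) *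
      poch (E+D-B-C-A) (n-j-i))) * hc
  rw [Finset.sum_congr rfl h3, Finset.sum_sigma']
  apply Finset.sum_bij' (fun z _ => (⟨z.2, z.1 - z.2⟩ : (_ : ℕ) × ℕ))
    (fun z _ => (⟨z.1 + z.2, z.1⟩ : (_ : ℕ) × ℕ))
  · rintro ⟨k, j⟩ h; simp only [Finset.mem_sigma, Finset.mem_range] at h ⊢; omega
  · rintro ⟨j, i⟩ h; simp only [Finset.mem_sigma, Finset.mem_range] at h ⊢; omega
  · rintro ⟨k, j⟩ h
    simp only [Finset.mem_sigma, Finset.mem_range] at h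
    simp only [Sigma.mk.injEq, heq_eq_eq, and_true]; omega
  · rintro ⟨j, i⟩ h
    simp
  · rintro ⟨k, j⟩ h
    simp only [Finset.mem_sigma, Finset.mem_range] at h
    simp only
    rw [show j + (k - j) = k by omega]

/-- The hypergeometric sum behind `racah`. -/
def hyp (n : ℕ) (A B C E F D : ℝ) : ℝ :=
  ∑ k ∈ Finset.range (n + 1),
    (poch (-(n : ℝ)) k * poch A k * poch B k * poch C k) /
      (poch E k * poch F k * poch D k * (Nat.factorial k : ℝ))

theorem racah_eq (𝒩 : ℕ) (α β δ : ℝ) (n m : ℕ) : racah 𝒩 α β δ n m =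
    hyp n ((n : ℝ) + α + β + 1) (-(m : ℝ)) ((m : ℝ) - (𝒩 : ℝ) + δ) (α+1) (β+δ+1) (-(𝒩 : ℝ)) := rfl

/-- Sum with the `E`, `F` denominators cleared. -/
def hypc (n : ℕ) (A B C E F D : ℝ) : ℝ :=
  ∑ k ∈ Finset.range (n + 1),
    (poch (-(n : ℝ)) k * poch A k * poch B k * poch C k) /
      (poch D k * (Nat.factorial k : ℝ)) * poch (E+k) (n-k) * poch (F+k) (n-k)

theorem hypc_of_hyp (n : ℕ) (A B C E F D : ℝ) (hE : poch E n ≠ 0) (hF : poch F n ≠ 0) :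
    poch E n * poch F n * hyp n A B C E F D = hypc n A B C E F D := by
  unfold hyp hypc
  rw [Finset.mul_sum]
  apply Finset.sum_congr rfl
  intro k hk
  have hk' : k ≤ n := by have := Finset.mem_range.1 hk; omega
  have h1 := poch_ne_of_le hk' hE
  have h2 := poch_ne_of_le hk' hF
  rw [poch_split E hk', poch_split F hk']
  field_simp

theorem hypc_whipple (n : ℕ) (A B C E F D E' F' : ℝ) (hD : poch D n ≠ 0)
    (hb : A + B + C + 1 - n = D + E + F) (hE' : E' = A + 1 - n - F) (hF' : F' = A + 1 - n - E) :
    hypc n A B C E F D = hypc n A (D-B) (D-C) E' F' D := by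
  have hw := whipple n A B C D E hD
  have e1 : E + D - B - C - A = 1 - n - F := by linarith
  have e2 : E + D - B - C = E' := by linarith
  rw [e1, e2] at hw
  have t1 : hypc n A B C E F D = (-1)^n * ∑ k ∈ range (n+1), (n.choose k : ℝ) * poch A k *
      (poch B k * poch C k / poch D k) * poch (E+k) (n-k) * poch (1-n-F) (n-k) := by
    unfold hypc
    rw [Finset.mul_sum]
    apply Finset.sum_congr rfl
    intro k hk
    have hk' : k ≤ n := by have := Finset.mem_range.1 hk; omega
    have hr := poch_reflect (F+k) (n-k)
    rw [Nat.cast_sub hk', show 1 - ((n:ℝ) - k) - (F + k) = 1 - n - F by ring] at hr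
    rw [hr, poch_neg_nat]
    have hf : (k.factorial : ℝ) ≠ 0 := by positivity
    have hDk := poch_ne_of_le hk' hD
    have hsg : (-1:ℝ)^n * (-1)^(n-k) = (-1)^k := by
      obtain ⟨m, rfl⟩ := Nat.exists_eq_add_of_le hk'
      rw [show k + m - k = m by omega, pow_add, mul_assoc, ← mul_pow]; simp
    rw [← hsg]
    field_simp
  have t2 : hypc n A (D-B) (D-C) E' F' D = (-1)^n * ∑ k ∈ range (n+1), (n.choose k : ℝ) * poch A k *
      (poch (D-B) k * poch (D-C) k / poch D k) * poch (E'+k) (n-k) * poch (E-A) (n-k) := by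
    unfold hypc
    rw [Finset.mul_sum]
    apply Finset.sum_congr rfl
    intro k hk
    have hk' : k ≤ n := by have := Finset.mem_range.1 hk; omega
    have hr := poch_reflect (F'+k) (n-k)
    rw [Nat.cast_sub hk', show 1 - ((n:ℝ) - k) - (F' + k) = E - A by rw [hF']; ring] at hr
    rw [hr, poch_neg_nat]
    have hf : (k.factorial : ℝ) ≠ 0 := by positivity
    have hDk := poch_ne_of_le hk' hD
    have hsg : (-1:ℝ)^n * (-1)^(n-k) = (-1)^k := by
      obtain ⟨m, rfl⟩ := Nat.exists_eq_add_of_le hk'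
      rw [show k + m - k = m by omega, pow_add, mul_assoc, ← mul_pow]; simp
    rw [← hsg]
    field_simp
  rw [t1, t2, hw]

/-- Two sums terminating at `min n m` agree. -/
theorem sum_trunc (f : ℕ → ℝ) (n m : ℕ) (hn : ∀ k, n < k → f k = 0) (hm : ∀ k, m < k → f k = 0) :
    ∑ k ∈ range (n+1), f k = ∑ k ∈ range (m+1), f k := by
  have b : ∀ l, (l = n ∨ l = m) → (∀ k, l < k → f k = 0) →
      ∑ k ∈ range (l+1), f k = ∑ k ∈ range (n+m+1), f k := by
    intro l hl hl0
    apply Finset.sum_subset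
    · intro k; simp only [Finset.mem_range]; omega
    · intro k _ h2; apply hl0; simp only [Finset.mem_range] at h2; omega
  rw [b n (Or.inl rfl) hn, b m (Or.inr rfl) hm]

theorem hyp_swap (n m : ℕ) (A C E F D : ℝ) :
    hyp n A (-(m:ℝ)) C E F D = hyp m C (-(n:ℝ)) A E F D := by
  unfold hyp
  rw [sum_trunc _ n m]
  · apply Finset.sum_congr rfl
    intro k _
    congr 1; ring
  · intro k hk; rw [poch_neg_nat_zero hk]; simp
  · intro k hk; rw [poch_neg_nat_zero hk]; simp

theorem hypc_to_hyp (p m : ℕ) (A C E F D : ℝ) (hE : poch E m ≠ 0) (hF : poch F m ≠ 0) :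
    hypc p A (-(m:ℝ)) C E F D = poch E p * poch F p * hyp p A (-(m:ℝ)) C E F D := by
  unfold hyp hypc
  rw [Finset.mul_sum]
  apply Finset.sum_congr rfl
  intro k hk
  have hk' : k ≤ p := by have := Finset.mem_range.1 hk; omega
  rcases le_or_gt k m with h | h
  · have h1 := poch_ne_of_le h hE
    have h2 := poch_ne_of_le h hF
    rw [poch_split E hk', poch_split F hk']
    field_simp
  · rw [poch_neg_nat_zero h]; simp

theorem core (a b c : ℝ) (M p q t m : ℕ) (h1 : t + p = M) (h2 : m + q = M)
    (hDp : poch (-(M:ℝ)) p ≠ 0) (hDm : poch (-(M:ℝ)) m ≠ 0)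
    (ha : poch (-a) p ≠ 0) (hF : poch ((M:ℝ)-a-b-c-1) p ≠ 0)
    (hb : poch (-(M:ℝ)+b+1) m ≠ 0) (hc : poch (-c) m ≠ 0)
    (hE4 : poch (-2*(M:ℝ)+a+b+c+2) m ≠ 0) (hF4 : poch (-(M:ℝ)+a+1) m ≠ 0) :
    hyp p ((p:ℝ)-a-c-1) (-(q:ℝ)) ((q:ℝ)-a-b-1) (-a) ((M:ℝ)-a-b-c-1) (-(M:ℝ))
    = (poch (-(M:ℝ)+b+1) p * poch (-c) p * poch (-(M:ℝ)+a+1) m * poch (-2*(M:ℝ)+a+b+c+2) m) /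
      (poch ((M:ℝ)-a-b-c-1) p * poch (-a) p * poch (-(M:ℝ)+b+1) m * poch (-c) m) *
      hyp m (-(M:ℝ)-q+a+b+1) (-(t:ℝ)) (-(M:ℝ)-p+a+c+1) (-2*(M:ℝ)+a+b+c+2) (-(M:ℝ)+a+1) (-(M:ℝ)) := by
  have c1 : (M:ℝ) = t + p := by exact_mod_cast h1.symm
  have c2 : (M:ℝ) = m + q := by exact_mod_cast h2.symm
  have s1 := hypc_of_hyp p ((p:ℝ)-a-c-1) (-(q:ℝ)) ((q:ℝ)-a-b-1) (-a) ((M:ℝ)-a-b-c-1) (-(M:ℝ)) ha hF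
  rw [hypc_whipple p _ _ _ _ _ _ (-(M:ℝ)+b+1) (-c) hDp (by ring) (by ring) (by ring),
    show -(M:ℝ) - -(q:ℝ) = -(m:ℝ) by rw [c2]; ring, hypc_to_hyp p m _ _ _ _ _ hb hc, hyp_swap p m] at s1
  have s2 := hypc_of_hyp m (-(M:ℝ) - ((q:ℝ)-a-b-1)) (-(p:ℝ)) ((p:ℝ)-a-c-1) (-(M:ℝ)+b+1) (-c) (-(M:ℝ)) hb hc
  rw [hypc_whipple m _ _ _ _ _ _ (-2*(M:ℝ)+a+b+c+2) (-(M:ℝ)+a+1) hDm (by rw [c2]; ring)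
    (by rw [c2]; ring) (by rw [c2]; ring),
    ← hypc_of_hyp m _ _ _ _ _ _ hE4 hF4,
    show -(M:ℝ) - -(p:ℝ) = -(t:ℝ) by rw [c1]; ring,
    show -(M:ℝ) - ((q:ℝ)-a-b-1) = -(M:ℝ)-q+a+b+1 by ring,
    show -(M:ℝ) - ((p:ℝ)-a-c-1) = -(M:ℝ)-p+a+c+1 by ring] at s2
  rw [show -(M:ℝ) - ((q:ℝ)-a-b-1) = -(M:ℝ)-q+a+b+1 by ring] at s1
  rw [div_mul_eq_mul_div, eq_div_iff (by simp only [ne_eq, mul_eq_zero, not_or]; exact ⟨⟨⟨hF, ha⟩, hb⟩, hc⟩)]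
  linear_combination (poch (-(M:ℝ)+b+1) m * poch (-c) m) * s1 +
    (poch (-(M:ℝ)+b+1) p * poch (-c) p) * s2

/-- Factorization of the bivariate Tratnik product of Racah polynomials into the Tratnik
form `R₂`: for `0 ≤ x₁ ≤ x₂ ≤ N` and `k₁, k₂ ≥ 0` with `k₁ + k₂ ≤ N`, `k₁ ≤ x₂`,
the product `r_{x₁}(k₁;…)·r_{N−x₂}(N−k₁−k₂;…)` equals an explicit quotient of
Pochhammer symbols times `r_{k₁}(x₁;…)·r_{k₂}(x₂−k₁;…)`. -/
theorem stmt18 (j0 j1 j2 j3 j4 : ℝ) (N : ℕ)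
    (h12 : j1 ≥ j2) (h24 : j2 ≥ j4) (h04 : j0 ≥ j4)
    (h0 : j0 ≥ 0) (h1 : j1 ≥ 0) (h2 : j2 ≥ 0) (h3 : j3 ≥ 0) (h4 : j4 ≥ 0)
    (hup : j1 + j2 + j0 + j4 ≥ j3) (hlow : j3 ≥ j1 + j2 + j0 - j4)
    (hN : 0 < N) (hNdef : (N : ℝ) = j1 + j2 - j3 + j4 + j0) :
    ∀ x1 x2 k1 k2 : ℕ, x1 ≤ x2 → x2 ≤ N → k1 + k2 ≤ N → k1 ≤ x2 →
    (∀ k : ℕ, k ≤ x1 →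
      poch (-2*j2) k ≠ 0 ∧ poch ((x2 : ℝ) - 2*j1 - 2*j2 + 2*j3 + 1) k ≠ 0 ∧
      poch (-(x2 : ℝ)) k ≠ 0) →
    (∀ k : ℕ, k ≤ N - x2 →
      poch (-2*j0) k ≠ 0 ∧ poch ((N : ℝ) - k1 - 2*j0 - 2*j1 - 2*j4 - 1) k ≠ 0 ∧
      poch ((k1 : ℝ) - N) k ≠ 0) →
    (∀ k : ℕ, k ≤ k1 →
      poch (-2*j2) k ≠ 0 ∧ poch ((x2 : ℝ) - 2*j1 - 2*j2 + 2*j3 + 1) k ≠ 0 ∧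
      poch (-(x2 : ℝ)) k ≠ 0) →
    (∀ k : ℕ, k ≤ k2 →
      poch (2*(k1 : ℝ) - 2*j2 + 2*j3 + 2) k ≠ 0 ∧
      poch ((k1 : ℝ) + N - 2*j1 - 2*j2 + 2*j3 - 2*j4 + 1) k ≠ 0 ∧
      poch ((k1 : ℝ) - N) k ≠ 0) →
    poch ((N : ℝ) - k1 - 2*j0 - 2*j1 - 2*j4 - 1) (N - x2) ≠ 0 →
    poch (-2*j0) (N - x2) ≠ 0 →
    poch ((k1 : ℝ) - N + 2*j1 + 1) k2 ≠ 0 →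
    poch (-2*j4) k2 ≠ 0 →
    racah x2 (-2*j2 - 1) (-2*j1 - 1) ((x2 : ℝ) - 2*j2 + 2*j3 + 1) x1 k1 *
      racah (N - k1) (-2*j0 - 1) (-2*j4 - 1) ((N : ℝ) - k1 - 2*j0 - 2*j1 - 1)
        (N - x2) (N - k1 - k2)
    = (poch ((k1 : ℝ) - N + 2*j1 + 1) (N - x2) * poch (-2*j4) (N - x2) *
        poch ((k1 : ℝ) + 2*j0 - N + 1) k2 * poch (2*(k1 : ℝ) - 2*j2 + 2*j3 + 2) k2) /
      (poch ((N : ℝ) - k1 - 2*j0 - 2*j1 - 2*j4 - 1) (N - x2) * poch (-2*j0) (N - x2) *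
        poch ((k1 : ℝ) - N + 2*j1 + 1) k2 * poch (-2*j4) k2) *
      racah x2 (-2*j2 - 1) (2*j3 + 1) ((x2 : ℝ) - 2*j1 - 2*j2 - 1) k1 x1 *
      racah (N - k1) (2*(k1 : ℝ) - 2*j2 + 2*j3 + 1) (-2*j4 - 1)
        ((k1 : ℝ) + N - 2*j1 - 2*j2 + 2*j3 + 1) k2 (x2 - k1) := by
  intro x1 x2 k1 k2 hx12 hx2N hk12 hk1x2 H1 H2 H3 H4 H5 H6 H7 H8
  obtain ⟨t, rfl⟩ := Nat.exists_eq_add_of_le hk1x2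
  obtain ⟨p, rfl⟩ := Nat.exists_eq_add_of_le hx2N
  obtain ⟨q, hq⟩ := Nat.exists_eq_add_of_le hk12
  have n1 : k1 + t + p - (k1 + t) = p := by omega
  have n2 : k1 + t + p - k1 = t + p := by omega
  have n3 : t + p - k2 = q := by omega
  have n4 : k1 + t - k1 = t := by omega
  have hqM : k2 + q = t + p := by omega
  have hqR : (k2:ℝ) + q = t + p := by exact_mod_cast hqM
  rw [n1] at H2 H5 H6
  rw [n1, n2, n3, n4]
  have hNd : (k1:ℝ) + t + p = j1 + j2 - j3 + j4 + j0 := by rw [← hNdef]; push_cast; ring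
  have hj : 2 * j3 - 2 * j2 = 2*j1+2*j4+2*j0 - 2*((k1:ℝ) + t + p) := by linarith
  have D1 := (H2 p le_rfl).2.2
  have D2 := (H4 k2 le_rfl).2.2
  have D3 := (H4 k2 le_rfl).1
  have D4 := (H4 k2 le_rfl).2.1
  have a1 : (k1:ℝ) - ((k1+t+p:ℕ):ℝ) = -((t+p:ℕ):ℝ) := by push_cast; ring
  have a2 : ((k1+t+p:ℕ):ℝ) - k1 - 2*j0 - 2*j1 - 2*j4 - 1
      = ((t+p:ℕ):ℝ) - 2*j0 - 2*j1 - 2*j4 - 1 := by push_cast; ring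
  have a3 : 2*(k1:ℝ) - 2*j2 + 2*j3 + 2 = -2*((t+p:ℕ):ℝ) + 2*j0 + 2*j1 + 2*j4 + 2 := by
    push_cast; linarith
  have a4 : (k1:ℝ) + ((k1+t+p:ℕ):ℝ) - 2*j1 - 2*j2 + 2*j3 - 2*j4 + 1
      = -((t+p:ℕ):ℝ) + 2*j0 + 1 := by
    push_cast; linarith
  have a5 : (k1:ℝ) + 2*j0 - ((k1+t+p:ℕ):ℝ) + 1 = -((t+p:ℕ):ℝ) + 2*j0 + 1 := by
    push_cast; ring
  have a6 : -2*j0 = -(2*j0) := by ring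
  have a7 : -2*j4 = -(2*j4) := by ring
  have e1 : racah (k1+t) (-2*j2 - 1) (-2*j1 - 1) (((k1+t:ℕ) : ℝ) - 2*j2 + 2*j3 + 1) x1 k1
      = racah (k1+t) (-2*j2 - 1) (2*j3 + 1) (((k1+t:ℕ) : ℝ) - 2*j1 - 2*j2 - 1) k1 x1 := by
    rw [racah_eq, racah_eq, hyp_swap]
    congr 1 <;> ring
  have e2 : racah (t+p) (-2*j0 - 1) (-2*j4 - 1) (((k1+t+p:ℕ) : ℝ) - k1 - 2*j0 - 2*j1 - 1) p q
      = hyp p ((p:ℝ)-2*j0-2*j4-1) (-(q:ℝ)) ((q:ℝ)-2*j0-2*j1-1) (-(2*j0))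
        (((t+p:ℕ):ℝ)-2*j0-2*j1-2*j4-1) (-((t+p:ℕ):ℝ)) := by
    rw [racah_eq]
    congr 1 <;> push_cast <;> ring
  have e4 : racah (t+p) (2*(k1 : ℝ) - 2*j2 + 2*j3 + 1) (-2*j4 - 1)
        ((k1 : ℝ) + ((k1+t+p:ℕ) : ℝ) - 2*j1 - 2*j2 + 2*j3 + 1) k2 t
      = hyp k2 (-((t+p:ℕ):ℝ)-q+2*j0+2*j1+1) (-(t:ℝ)) (-((t+p:ℕ):ℝ)-p+2*j0+2*j4+1)
        (-2*((t+p:ℕ):ℝ)+2*j0+2*j1+2*j4+2) (-((t+p:ℕ):ℝ)+2*j0+1) (-((t+p:ℕ):ℝ)) := by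
    rw [racah_eq]
    congr 1 <;> push_cast <;> linarith
  rw [e1, e2, e4]
  rw [a1] at D1 D2 H7
  rw [a2] at H5
  rw [a3] at D3
  rw [a4] at D4
  rw [a6] at H6
  rw [a7] at H8
  rw [a1, a2, a3, a5, a6, a7]
  rw [core (2*j0) (2*j1) (2*j4) (t+p) p q t k2 rfl hqM D1 D2 H6 H5 H7 H8 D3 D4]
  ring
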